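/- The integral of the linear function (w,x,y,z) ↦ 10 − 5(w + x + y + z) over the convex hull Δ in ℝ⁴ of the eight points (0,0,0,0), (1,0,0,0), (0,1,0,0), (0,0,1,0), (0,0,0,1), (0,1,0,1), (0,1,1,0), (0,0,0,2), with respect to 4-dimensional Lebesgue measure, equals 3/4 (equivalently, ∫_Δ (w+x+y+z) = 4/15). -/

import Mathlib

open MeasureTheory

/-- The Okounkov body Δ of the quintic Del Pezzo fourfold `M₄`:
the convex hull in ℝ⁴ of the eight points
(0,0,0,0), (1,0,0,0), (0,1,0,0), (0,0,1,0), (0,0,0,1), (0,1,0,1), (0,1,1,0), (0,0,0,2). -/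
noncomputable def DeltaM4 : Set (Fin 4 → ℝ) :=
  convexHull ℝ
    ({![0,0,0,0], ![1,0,0,0], ![0,1,0,0], ![0,0,1,0],
      ![0,0,0,1], ![0,1,0,1], ![0,1,1,0], ![0,0,0,2]} : Set (Fin 4 → ℝ))

/-!
`DeltaM4` is the pyramid with apex `e₀` over its facet `w = 0`. Its slice at height `w` is the
`(1 - w)`-dilate of that facet, so by homogeneity the integral of an affine function over `DeltaM4`
is determined by the volume `5 / 6` of the facet and by first moments of it. The facet is the region
under the graph of `2 - y - max x y` over the unit square, which turns the volume and the moment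
`∫ (x + y + z) = 9 / 8` into iterated integrals of piecewise polynomials.
-/

open Set
open Matrix (vecCons cons_val_zero)
open scoped Pointwise

section Slicing

variable {E : Type*} [NormedAddCommGroup E] {n : ℕ}
  {S : Set (Fin (n + 1) → ℝ)} {f : (Fin (n + 1) → ℝ) → E}

theorem isCompact_preimage_vecCons (hS : IsCompact S) (t : ℝ) :
    IsCompact (vecCons t ⁻¹' S) := by
  have tail_image_compact : IsCompact (Fin.tail '' S) := hS.image (by unfold Fin.tail; fun_prop)
  refine tail_image_compact.of_isClosed_subset (hS.isClosed.preimage (by fun_prop)) ?_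
  exact fun q hq => ⟨vecCons t q, hq, Fin.tail_vecCons _ _⟩

variable [NormedSpace ℝ E]

theorem setIntegral_eq_integral_vecCons (hS : MeasurableSet S) (hf : IntegrableOn f S) :
    ∫ p in S, f p = ∫ t : ℝ, ∫ q in vecCons t ⁻¹' S, f (vecCons t q) := by
  let e := (MeasurableEquiv.piFinSuccAbove (fun _ : Fin (n + 1) => ℝ) 0).symm
  have he : MeasurePreserving e volume volume :=
    (volume_preserving_piFinSuccAbove (fun _ : Fin (n + 1) => ℝ) 0).symm
  have e_apply (t : ℝ) (q : Fin n → ℝ) : e (t, q) = vecCons t q := Fin.insertNth_zero' t q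
  have indicator_integrable : Integrable (S.indicator f ∘ e) :=
    (he.integrable_comp_emb e.measurableEmbedding).2 ((integrable_indicator_iff hS).2 hf)
  calc ∫ p in S, f p
      = ∫ x, S.indicator f (e x) := by
        rw [he.integral_comp e.measurableEmbedding, integral_indicator hS]
    _ = ∫ t : ℝ, ∫ q : Fin n → ℝ, S.indicator f (e (t, q)) := integral_prod _ indicator_integrable
    _ = _ := by
        refine integral_congr_ae (.of_forall fun t => ?_)
        simp only [e_apply]
        exact integral_indicator (f := fun q => f (vecCons t q))
          ((by fun_prop : Continuous (vecCons t)).measurable hS)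

theorem setIntegral_eq_intervalIntegral_vecCons (hS : IsCompact S) (hf : ContinuousOn f S)
    {a b : ℝ} (hab : a ≤ b) (hSab : ∀ p ∈ S, p 0 ∈ Icc a b) :
    ∫ p in S, f p = ∫ t in a..b, ∫ q in vecCons t ⁻¹' S, f (vecCons t q) := by
  rw [setIntegral_eq_integral_vecCons hS.measurableSet (hf.integrableOn_compact hS),
    intervalIntegral.integral_of_le hab, ← integral_Icc_eq_integral_Ioc]
  refine (setIntegral_eq_integral_of_forall_compl_eq_zero fun t ht => ?_).symm
  have slice_empty : vecCons t ⁻¹' S = ∅ :=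
    eq_empty_of_forall_notMem fun q hq => ht (hSab _ hq)
  rw [slice_empty, setIntegral_empty]

theorem setIntegral_fin_one_eq_intervalIntegral (g : (Fin 1 → ℝ) → E) {a b : ℝ} (hab : a ≤ b) :
    ∫ q in {q : Fin 1 → ℝ | q 0 ∈ Icc a b}, g q = ∫ t in a..b, g ![t] := by
  have hem := volume_preserving_funUnique (Fin 1) ℝ
  have vec_apply_zero (q : Fin 1 → ℝ) : ![q 0] = q := funext (Fin.forall_fin_one.2 rfl)
  rw [intervalIntegral.integral_of_le hab, ← integral_Icc_eq_integral_Ioc,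
    ← hem.setIntegral_preimage_emb (MeasurableEquiv.measurableEmbedding _)]
  simp only [MeasurableEquiv.funUnique_apply, Fin.default_eq_zero, vec_apply_zero]
  rfl

theorem setIntegral_fin_three_eq_iterated {S : Set (Fin 3 → ℝ)} {f : (Fin 3 → ℝ) → E}
    (hS : IsCompact S) (hf : ContinuousOn f S) {a b : ℝ} {c d : ℝ → ℝ} {u v : ℝ → ℝ → ℝ}
    (hab : a ≤ b) (hcd : ∀ x ∈ Icc a b, c x ≤ d x)
    (huv : ∀ x ∈ Icc a b, ∀ y ∈ Icc (c x) (d x), u x y ≤ v x y)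
    (mem_iff : ∀ p, p ∈ S ↔ p 0 ∈ Icc a b ∧ p 1 ∈ Icc (c (p 0)) (d (p 0)) ∧
      p 2 ∈ Icc (u (p 0) (p 1)) (v (p 0) (p 1))) :
    ∫ p in S, f p = ∫ x in a..b, ∫ y in c x..d x, ∫ z in u x y..v x y, f ![x, y, z] := by
  rw [setIntegral_eq_intervalIntegral_vecCons hS hf hab fun p hp => ((mem_iff p).1 hp).1]
  refine intervalIntegral.integral_congr fun x hx => ?_
  rw [uIcc_of_le hab] at hx
  rw [setIntegral_eq_intervalIntegral_vecCons (f := fun q => f (vecCons x q))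
    (isCompact_preimage_vecCons hS x) (hf.comp (by fun_prop) fun _ h => h) (hcd x hx)
    fun q hq => ((mem_iff _).1 hq).2.1]
  refine intervalIntegral.integral_congr fun y hy => ?_
  rw [uIcc_of_le (hcd x hx)] at hy
  have slice_eq : vecCons y ⁻¹' (vecCons x ⁻¹' S) = {r | r 0 ∈ Icc (u x y) (v x y)} := by
    ext r
    exact (mem_iff _).trans ((and_iff_right hx).trans (and_iff_right hy))
  rw [slice_eq, setIntegral_fin_one_eq_intervalIntegral _ (huv x hx y hy)]

end Slicing

theorem integral_comp_max {E : Type*} [NormedAddCommGroup E] [NormedSpace ℝ E] {F : ℝ → ℝ → E}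
    (hF : Continuous F.uncurry) {a b x : ℝ} (hx : x ∈ Icc a b) :
    ∫ y in a..b, F y (max x y) = (∫ y in a..x, F y x) + ∫ y in x..b, F y y := by
  have hmax : Continuous fun y => F y (max x y) :=
    hF.comp (continuous_id.prodMk (continuous_const.max continuous_id))
  rw [← intervalIntegral.integral_add_adjacent_intervals (hmax.intervalIntegrable a x)
    (hmax.intervalIntegrable x b)]
  congr 1
  · refine intervalIntegral.integral_congr fun y hy => ?_
    rw [uIcc_of_le hx.1] at hy
    simp only [max_eq_left hy.2]
  · refine intervalIntegral.integral_congr fun y hy => ?_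
    rw [uIcc_of_le hx.2] at hy
    simp only [max_eq_right hy.1]

theorem integral_sum_mul_pow {n : ℕ} (c : Fin n → ℝ) (a b : ℝ) :
    ∫ t in a..b, ∑ i, c i * t ^ (i : ℕ) =
      ∑ i, c i * ((b ^ (i + 1 : ℕ) - a ^ (i + 1 : ℕ)) / (i + 1)) := by
  rw [intervalIntegral.integral_finsetSum fun i _ =>
    Continuous.intervalIntegrable (by fun_prop) _ _]
  simp

theorem integral_of_eqOn_cubic {g : ℝ → ℝ} {a b : ℝ} (c₀ c₁ c₂ c₃ : ℝ)
    (hg : EqOn g (fun t => c₀ + c₁ * t + c₂ * t ^ 2 + c₃ * t ^ 3) (uIcc a b)) :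
    ∫ t in a..b, g t =
      c₀ * (b - a) + c₁ * ((b ^ 2 - a ^ 2) / 2) + c₂ * ((b ^ 3 - a ^ 3) / 3) +
        c₃ * ((b ^ 4 - a ^ 4) / 4) := by
  have sum_formula := integral_sum_mul_pow ![c₀, c₁, c₂, c₃] a b
  norm_num [Fin.sum_univ_four, Matrix.cons_val_two, Matrix.cons_val_three] at sum_formula
  rw [intervalIntegral.integral_congr hg, sum_formula]

/-- The pyramid of height `1` in `ℝⁿ⁺¹` with apex `e₀` over the base `{0} × B`. -/
def pyramid {n : ℕ} (B : Set (Fin n → ℝ)) : Set (Fin (n + 1) → ℝ) :=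
  {p | p 0 ∈ Icc 0 1 ∧ Fin.tail p ∈ (1 - p 0) • B}

section Pyramid

variable {n : ℕ} {B : Set (Fin n → ℝ)}

theorem convexHull_insert_apex {V : Set (Fin n → ℝ)} (hV : V.Nonempty) :
    convexHull ℝ (insert (vecCons 1 0) (vecCons 0 '' V)) = pyramid (convexHull ℝ V) := by
  let baseEmbedding : (Fin n → ℝ) →ₗ[ℝ] (Fin (n + 1) → ℝ) :=
    (Fin.consLinearEquiv ℝ fun _ => ℝ).toLinearMap ∘ₗ LinearMap.inr ℝ ℝ (Fin n → ℝ)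
  have base_hull : convexHull ℝ (vecCons 0 '' V : Set (Fin (n + 1) → ℝ)) =
      vecCons 0 '' convexHull ℝ V := (baseEmbedding.image_convexHull V).symm
  have combination (s t : ℝ) (q : Fin n → ℝ) :
      s • (vecCons 1 0 : Fin (n + 1) → ℝ) + t • vecCons 0 q = vecCons s (t • q) := by
    ext i
    cases i using Fin.cases <;> simp
  rw [convexHull_insert (hV.image _), base_hull]
  ext p
  simp only [mem_convexJoin, mem_singleton_iff, exists_eq_left, exists_mem_image]
  constructor
  · rintro ⟨q, hq, s, t, hs, ht, hst, rfl⟩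
    obtain rfl : t = 1 - s := by linarith
    rw [combination]
    exact ⟨⟨hs, sub_nonneg.1 ht⟩, smul_mem_smul_set hq⟩
  · rintro ⟨⟨hp₀, hp₁⟩, q, hq, hqp⟩
    refine ⟨q, hq, p 0, 1 - p 0, hp₀, sub_nonneg.2 hp₁, by ring, ?_⟩
    rw [combination]
    exact (congrArg _ hqp).trans (Fin.cons_self_tail p)

theorem isCompact_pyramid (hB : IsCompact B) : IsCompact (pyramid B) := by
  have image_eq : pyramid B =
      (fun x : ℝ × (Fin n → ℝ) => (vecCons x.1 ((1 - x.1) • x.2) : Fin (n + 1) → ℝ)) ''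
        Icc 0 1 ×ˢ B := by
    ext p
    constructor
    · rintro ⟨hp, q, hq, hqp⟩
      exact ⟨(p 0, q), ⟨hp, hq⟩, (congrArg _ hqp).trans (Fin.cons_self_tail p)⟩
    · rintro ⟨⟨t, q⟩, ⟨ht, hq⟩, rfl⟩
      exact ⟨ht, smul_mem_smul_set hq⟩
  rw [image_eq]
  exact (isCompact_Icc.prod hB).image (by fun_prop)

theorem setIntegral_pyramid {E : Type*} [NormedAddCommGroup E] [NormedSpace ℝ E]
    (hB : IsCompact B) {f : (Fin (n + 1) → ℝ) → E} (hf : ContinuousOn f (pyramid B)) :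
    ∫ p in pyramid B, f p =
      ∫ t in (0 : ℝ)..1, (1 - t) ^ n • ∫ q in B, f (vecCons t ((1 - t) • q)) := by
  rw [setIntegral_eq_intervalIntegral_vecCons (isCompact_pyramid hB) hf zero_le_one
    fun p hp => hp.1]
  refine intervalIntegral.integral_congr_Ioo_of_le zero_le_one fun t ht => ?_
  have slice_eq : vecCons t ⁻¹' pyramid B = (1 - t) • B := by
    ext q
    exact and_iff_right (Ioo_subset_Icc_self ht)
  have ht' : 0 < 1 - t := sub_pos.2 ht.2
  rw [slice_eq, Measure.setIntegral_comp_smul_of_pos volume (fun q => f (vecCons t q)) B ht',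
    Module.finrank_fin_fun, smul_inv_smul₀ (pow_pos ht' n).ne']

theorem integral_one_sub_pow (n : ℕ) : ∫ t in (0 : ℝ)..1, (1 - t) ^ n = 1 / (n + 1) := by
  rw [intervalIntegral.integral_comp_sub_left (fun t => t ^ n) 1]
  simp

theorem setIntegral_pyramid_affine (hB : IsCompact B) (α β : ℝ) (ℓ : (Fin n → ℝ) →L[ℝ] ℝ) :
    ∫ p in pyramid B, (α + β * p 0 + ℓ (Fin.tail p)) =
      (α / (n + 1) + β / ((n + 1) * (n + 2))) * volume.real B + (∫ q in B, ℓ q) / (n + 2) := by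
  have slice_integral (t : ℝ) : ∫ q in B, (α + β * t + ℓ ((1 - t) • q)) =
      (α + β - β * (1 - t)) * volume.real B + (1 - t) * ∫ q in B, ℓ q := by
    simp only [map_smul, smul_eq_mul]
    rw [integral_add (continuousOn_const.integrableOn_compact hB)
      ((ℓ.continuous.continuousOn.integrableOn_compact hB).const_mul _), setIntegral_const,
      integral_const_mul, smul_eq_mul]
    ring
  rw [setIntegral_pyramid hB (by unfold Fin.tail; fun_prop)]
  simp only [cons_val_zero, Fin.tail_vecCons, slice_integral, smul_eq_mul]
  have expand (t : ℝ) : (1 - t) ^ n *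
      ((α + β - β * (1 - t)) * volume.real B + (1 - t) * ∫ q in B, ℓ q) =
      (α + β) * volume.real B * (1 - t) ^ n +
        ((∫ q in B, ℓ q) - β * volume.real B) * (1 - t) ^ (n + 1) := by ring
  simp only [expand]
  rw [intervalIntegral.integral_add (Continuous.intervalIntegrable (by fun_prop) _ _)
    (Continuous.intervalIntegrable (by fun_prop) _ _), intervalIntegral.integral_const_mul,
    intervalIntegral.integral_const_mul, integral_one_sub_pow, integral_one_sub_pow]
  push_cast
  field_simp
  ring

end Pyramid

theorem smul_add_smul_add_smul_mem_of_zero_mem {𝕜 E : Type*} [Field 𝕜] [LinearOrder 𝕜]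
    [IsStrictOrderedRing 𝕜] [AddCommGroup E] [Module 𝕜 E] {s : Set E} (hs : Convex 𝕜 s)
    (h₀ : 0 ∈ s) {x y z : E} (hx : x ∈ s) (hy : y ∈ s) (hz : z ∈ s)
    {a b c : 𝕜} (ha : 0 ≤ a) (hb : 0 ≤ b) (hc : 0 ≤ c) (habc : a + b + c ≤ 1) :
    a • x + b • y + c • z ∈ s := by
  have combination_mem := hs.sum_mem (t := Finset.univ) (w := ![1 - (a + b + c), a, b, c])
    (z := ![0, x, y, z]) (by simp [Fin.forall_fin_succ, *])
    (by simp only [Fin.sum_univ_four, Matrix.cons_val]; ring)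
    (by simp [Fin.forall_fin_succ, *])
  simpa [Fin.sum_univ_four] using combination_mem

namespace DeltaM4

/-- The facet `w = 0` of `DeltaM4`, in the coordinates `(x, y, z)`. -/
noncomputable def base : Set (Fin 3 → ℝ) :=
  convexHull ℝ
    {![0, 0, 0], ![1, 0, 0], ![0, 1, 0], ![0, 0, 1], ![1, 0, 1], ![1, 1, 0], ![0, 0, 2]}

theorem eq_pyramid_base : DeltaM4 = pyramid base := by
  rw [base, ← convexHull_insert_apex (insert_nonempty _ _), DeltaM4, insert_comm]
  simp only [image_insert_eq, image_singleton]
  congr!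
  simp

theorem isCompact_base : IsCompact base :=
  (toFinite _).isCompact_convexHull ℝ

/-- The closed region between the unit square of the `(x, y)`-plane and the graph of the height
function `z = 2 - y - max x y = min (2 - x - y) (2 - 2 * y)`. -/
def cappedSquare : Set (Fin 3 → ℝ) :=
  {q | q 0 ∈ Icc 0 1 ∧ q 1 ∈ Icc 0 1 ∧ q 2 ∈ Icc 0 (2 - q 1 - max (q 0) (q 1))}

theorem convex_cappedSquare : Convex ℝ cappedSquare := by
  have height_concave : ConcaveOn ℝ univ
      fun q : Fin 3 → ℝ => 2 - q 1 - max (q 0) (q 1) := by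
    have proj_convex (i : Fin 3) : ConvexOn ℝ univ fun q : Fin 3 → ℝ => q i :=
      (LinearMap.proj (R := ℝ) (φ := fun _ => ℝ) i).convexOn convex_univ
    exact ((concaveOn_const 2 convex_univ).sub (proj_convex 1)).sub
      ((proj_convex 0).sup (proj_convex 1))
  rintro p ⟨hp₀, hp₁, hp₂⟩ q ⟨hq₀, hq₁, hq₂⟩ s t hs ht hst
  refine ⟨convex_Icc 0 1 hp₀ hq₀ hs ht hst, convex_Icc 0 1 hp₁ hq₁ hs ht hst,
    convex_Ici (0 : ℝ) hp₂.1 hq₂.1 hs ht hst, ?_⟩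
  calc s * p 2 + t * q 2
      ≤ s * (2 - p 1 - max (p 0) (p 1)) + t * (2 - q 1 - max (q 0) (q 1)) := by
        gcongr
        exacts [hp₂.2, hq₂.2]
    _ ≤ _ := height_concave.2 (mem_univ p) (mem_univ q) hs ht hst

theorem base_subset_cappedSquare : base ⊆ cappedSquare := by
  refine convexHull_min ?_ convex_cappedSquare
  simp only [insert_subset_iff, singleton_subset_iff, cappedSquare, mem_ofPred_eq]
  norm_num [Matrix.cons_val_two]

theorem cappedSquare_subset_base : cappedSquare ⊆ base := by
  intro q ⟨⟨hx₀, hx₁⟩, ⟨hy₀, _⟩, ⟨hz₀, hz₁⟩⟩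
  have hull_convex : Convex ℝ base := convex_convexHull ℝ _
  have zero_mem : 0 ∈ base := subset_convexHull ℝ _ (.inl (funext fun i => by fin_cases i <;> rfl))
  have e₁_mem : ![1, 0, 0] ∈ base := subset_convexHull ℝ _ (by simp)
  have e₂_mem : ![0, 1, 0] ∈ base := subset_convexHull ℝ _ (by simp)
  have e₁_add_e₂_mem : ![1, 1, 0] ∈ base := subset_convexHull ℝ _ (by simp)
  have e₁_add_e₃_mem : ![1, 0, 1] ∈ base := subset_convexHull ℝ _ (by simp)
  have two_e₃_mem : ![0, 0, 2] ∈ base := subset_convexHull ℝ _ (by simp)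
  -- The three cases are three simplices with common vertex `0` that triangulate the region.
  rcases le_total (q 0) (q 1) with hxy | hyx
  · rw [max_eq_right hxy] at hz₁
    convert smul_add_smul_add_smul_mem_of_zero_mem hull_convex zero_mem
      e₂_mem e₁_add_e₂_mem two_e₃_mem (sub_nonneg.2 hxy) hx₀ (div_nonneg hz₀ zero_le_two)
      (by linarith) using 1
    ext i; fin_cases i <;> simp
  · rw [max_eq_left hyx] at hz₁
    rcases le_total (q 2) (q 0 - q 1) with hzxy | hxyz
    · convert smul_add_smul_add_smul_mem_of_zero_mem hull_convex zero_mem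
        e₁_mem e₁_add_e₃_mem e₁_add_e₂_mem (sub_nonneg.2 hzxy) hz₀ hy₀ (by linarith) using 1
      ext i; fin_cases i <;> simp
    · convert smul_add_smul_add_smul_mem_of_zero_mem hull_convex zero_mem
        e₁_add_e₃_mem e₁_add_e₂_mem two_e₃_mem (sub_nonneg.2 hyx) hy₀
        (div_nonneg (sub_nonneg.2 hxyz) zero_le_two) (by linarith) using 1
      ext i; fin_cases i <;> simp

theorem base_eq_cappedSquare : base = cappedSquare :=
  base_subset_cappedSquare.antisymm cappedSquare_subset_base

theorem setIntegral_base {E : Type*} [NormedAddCommGroup E] [NormedSpace ℝ E]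
    {f : (Fin 3 → ℝ) → E} (hf : ContinuousOn f base) :
    ∫ q in base, f q =
      ∫ x in (0 : ℝ)..1, ∫ y in (0 : ℝ)..1, ∫ z in (0 : ℝ)..2 - y - max x y, f ![x, y, z] := by
  refine setIntegral_fin_three_eq_iterated isCompact_base hf zero_le_one
    (fun _ _ => zero_le_one) (fun x hx y hy => ?_) fun q => by rw [base_eq_cappedSquare]; rfl
  linarith [max_le hx.2 hy.2, hy.2]

theorem integral_height {x : ℝ} (hx : x ∈ Icc 0 1) :
    ∫ y in (0 : ℝ)..1, (2 - y - max x y) = 1 - x ^ 2 / 2 := by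
  rw [integral_comp_max (F := fun y m => 2 - y - m) (by fun_prop) hx,
    integral_of_eqOn_cubic (2 - x) (-1) 0 0 fun y _ => by ring,
    integral_of_eqOn_cubic 2 (-2) 0 0 fun y _ => by ring]
  ring

theorem volume_real_base : volume.real base = 5 / 6 := by
  calc volume.real base
      = ∫ _ in base, (1 : ℝ) := by simp
    _ = ∫ x in (0 : ℝ)..1, ∫ y in (0 : ℝ)..1, (2 - y - max x y) := by
        rw [setIntegral_base continuousOn_const]
        simp
    _ = 5 / 6 := by
        rw [integral_of_eqOn_cubic 1 0 (-1 / 2) 0 fun x hx => ?_]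
        · norm_num
        · rw [uIcc_of_le zero_le_one] at hx
          rw [integral_height hx]
          ring

theorem integral_vertical_moment {x : ℝ} (hx : x ∈ Icc 0 1) :
    ∫ y in (0 : ℝ)..1, ∫ z in (0 : ℝ)..2 - y - max x y, (x + y + z) =
      1 + x - x ^ 2 - x ^ 3 / 6 := by
  have z_integral (y h : ℝ) : ∫ z in (0 : ℝ)..h, (x + y + z) = (x + y) * h + h ^ 2 / 2 := by
    rw [integral_of_eqOn_cubic (x + y) 1 0 0 fun z _ => by ring]
    ring
  simp only [z_integral]
  rw [integral_comp_max (F := fun y m => (x + y) * (2 - y - m) + (2 - y - m) ^ 2 / 2)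
      (by fun_prop) hx,
    integral_of_eqOn_cubic (2 - x ^ 2 / 2) (-x) (-1 / 2) 0 fun y _ => by ring,
    integral_of_eqOn_cubic (2 * (1 + x)) (-2 * (1 + x)) 0 0 fun y _ => by ring]
  ring

theorem integral_sum_base : ∫ q in base, ∑ i, q i = 9 / 8 := by
  rw [setIntegral_base (by fun_prop),
    integral_of_eqOn_cubic 1 1 (-1) (-1 / 6) fun x hx => ?_]
  · norm_num
  · rw [uIcc_of_le zero_le_one] at hx
    simp only [Fin.sum_univ_three, Matrix.cons_val]
    rw [integral_vertical_moment hx]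
    ring

theorem setIntegral_affine (c d : ℝ) :
    ∫ p in DeltaM4, (c + d * (p 0 + p 1 + p 2 + p 3)) = 5 / 24 * c + 4 / 15 * d := by
  let ℓ : (Fin 3 → ℝ) →L[ℝ] ℝ := d • ∑ i, ContinuousLinearMap.proj i
  have ℓ_apply (q : Fin 3 → ℝ) : ℓ q = d * ∑ i, q i := by simp [ℓ]
  have affine_form (p : Fin 4 → ℝ) :
      c + d * (p 0 + p 1 + p 2 + p 3) = c + d * p 0 + ℓ (Fin.tail p) := by
    rw [ℓ_apply, Fin.sum_univ_three]
    change _ = c + d * p 0 + d * (p 1 + p 2 + p 3)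
    ring
  simp only [affine_form]
  rw [eq_pyramid_base, setIntegral_pyramid_affine isCompact_base, volume_real_base]
  simp only [ℓ_apply, integral_const_mul, integral_sum_base]
  ring

end DeltaM4

/-- The integral over Δ of the G-function `10 − 5(w+x+y+z)` of the valuation
`ν₍₋₁,₋₁₎ = 5·ord_{E_S}` equals `3/4`; equivalently, `∫_Δ (w+x+y+z) = 4/15`. -/
theorem integral_G_ES_DeltaM4 :
    (∫ p in DeltaM4, (10 - 5 * (p 0 + p 1 + p 2 + p 3)) = 3 / 4) ∧
      (∫ p in DeltaM4, (p 0 + p 1 + p 2 + p 3) = 4 / 15) := by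
  constructor
  · convert DeltaM4.setIntegral_affine 10 (-5) using 2
    · ext p
      ring
    · norm_num
  · convert DeltaM4.setIntegral_affine 0 1 using 2
    · ext p
      ring
    · norm_num
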